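/- Fix a lattice R' in K^{n-1} and complex numbers α, β with Re β + n − 1 < 0 and Re(α + β) > 0. Then the sum over all lattices R in K^n with R ∩ K^{n-1} = R' of (vol(R)/vol(R ∩ K^{n-1}))^β · (vol(R ∩ O^n)/vol(R ∩ O^{n-1}))^α equals [(1 − p^{−α}) / ((1 − p^{−α−β})(1 − p^{β+n−1}))] · 1/vol(O^{n-1} ∩ R'). -/

import Mathlib

/-!
Write `K = ℚ_p`, `O = ℤ_p`, and let `R₀` be the lattice `R'`, seen inside `K^m`.

A lattice `R` in `K^{m+1}` with `R ∩ K^m = R₀` is determined by the generator `p^k` of the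
fractional ideal of last coordinates of `R`, and by the class `q ∈ K^m / R₀` of the first `m`
coordinates of an element of `R` with last coordinate `p^k`. Conversely every pair `(k, q)` gives
such a lattice, called `latOf R₀ k q` (`latOf_injective`, `isLattice_latOf`, `exists_latOf_eq`).

Let `ν(q)` be the least `j ≥ 0` such that `p^j q` has an integral representative. The last
coordinates of `R` form `p^k O`, and those of `R ∩ O^{m+1}` form `p^{max(0, k + ν(q))} O`
(`norm_last_le_of_mem_inf`, `exists_mem_inf`). By Fubini (`rvol_eq`) the two volume ratios in the
summand are therefore `p^{-k}` and `p^{-max(0, k + ν(q))}` (`summand_latOf`).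

The set `{ν ≤ j}` consists of the classes `q` with `p^j q` in the image of `O^m`. Counting cosets
of `R₀` by volume, it has `p^{jm} / vol(R₀ ∩ O^m)` elements (`ncard_nu_le`).

Set `x = p^β` and `y = p^α`, so that `p^m |x| < 1 < |x y|`. The change of variables `j = k + ν(q)`
turns the sum into a product
`(∑_{j ∈ ℤ} x^{-j} y^{-max(0, j)}) · (∑_q x^{ν(q)})`.
The factors are `1/(1 - (xy)⁻¹) + x/(1 - x)` (`hasSum_int`) and
`(1 - x) / ((1 - p^m x) vol(R₀ ∩ O^m))` (`hasSum_pow_nu`), and `series_value` multiplies them out.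
-/

open MeasureTheory

noncomputable section

instance (p : ℕ) [Fact p.Prime] : MeasurableSpace ℚ_[p] := borel _

/-- The standard lattice `ℤ_p^n ⊂ ℚ_p^n`. -/
def stdLat (p n : ℕ) [Fact p.Prime] : Submodule ℤ_[p] (Fin n → ℚ_[p]) :=
  Submodule.pi Set.univ fun _ => 1

/-- A lattice in `ℚ_p^n` is a compact open `ℤ_p`-submodule. -/
def IsLattice {p n : ℕ} [Fact p.Prime] (R : Submodule ℤ_[p] (Fin n → ℚ_[p])) : Prop :=
  IsCompact (R : Set (Fin n → ℚ_[p])) ∧ IsOpen (R : Set (Fin n → ℚ_[p]))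

/-- The coordinate hyperplane `K^{n-1} = {x : x_{last} = 0}` inside `ℚ_p^{m+1}`,
viewed as a `ℤ_p`-submodule. -/
def Kpred (p m : ℕ) [Fact p.Prime] : Submodule ℤ_[p] (Fin (m + 1) → ℚ_[p]) :=
  LinearMap.ker ((LinearMap.proj (Fin.last m) :
    (Fin (m + 1) → ℚ_[p]) →ₗ[ℤ_[p]] ℚ_[p]))

/-- `R'` is a lattice in the subspace `W`: it is contained in `W`, compact, and open
in the subspace topology of `W`. -/
def IsLatticeWithin {p n : ℕ} [Fact p.Prime] (W R' : Submodule ℤ_[p] (Fin n → ℚ_[p])) : Prop :=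
  R' ≤ W ∧ IsCompact (R' : Set (Fin n → ℚ_[p])) ∧
    IsOpen (Subtype.val ⁻¹' (R' : Set (Fin n → ℚ_[p])) : Set W)

/-- The vector `p^ξ e_n + v`. -/
def genVec (p m : ℕ) [Fact p.Prime] (ξ : ℤ) (v : Fin (m + 1) → ℚ_[p]) :
    Fin (m + 1) → ℚ_[p] :=
  Pi.single (Fin.last m) ((p : ℚ_[p]) ^ ξ) + v

/-- The subset of `ℚ_p^j = K^j` corresponding to `A ∩ K^j`, where `K^j ⊆ ℚ_p^n` is the
span of the first `j` standard basis vectors. -/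
def restrictSet (p : ℕ) [Fact p.Prime] {n : ℕ} (j : ℕ) (A : Set (Fin n → ℚ_[p])) :
    Set (Fin j → ℚ_[p]) :=
  {y | (fun i : Fin n => if h : (i : ℕ) < j then y ⟨i, h⟩ else 0) ∈ A}
/-- Real-valued volume of a set. -/
def rvol {X : Type*} [MeasurableSpace X] (μ : Measure X) (A : Set X) : ℝ := (μ A).toReal

section Prelim

open scoped ENNReal Pointwise

variable {p : ℕ} [Fact p.Prime]

/-! ### Haar measure on `ℚ_p^n` -/

instance borelSpace_padic : BorelSpace ℚ_[p] := ⟨rfl⟩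

lemma mem_stdLat {n : ℕ} {x : Fin n → ℚ_[p]} : x ∈ stdLat p n ↔ ∀ i, ‖x i‖ ≤ 1 := by
  simp only [stdLat, Submodule.mem_pi, Set.mem_univ, true_implies, Submodule.mem_one]
  refine forall_congr' fun i => ⟨?_, fun h => ⟨⟨x i, h⟩, rfl⟩⟩
  rintro ⟨y, hy⟩
  rw [← hy]
  exact y.2

lemma coe_stdLat (n : ℕ) :
    (stdLat p n : Set (Fin n → ℚ_[p])) = Set.univ.pi fun _ => Metric.closedBall 0 1 := by
  ext x
  simp [mem_stdLat]

lemma isCompact_stdLat (n : ℕ) : IsCompact (stdLat p n : Set (Fin n → ℚ_[p])) := by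
  rw [coe_stdLat]
  exact isCompact_univ_pi fun _ => isCompact_closedBall _ _

lemma isOpen_stdLat (n : ℕ) : IsOpen (stdLat p n : Set (Fin n → ℚ_[p])) := by
  rw [coe_stdLat]
  exact isOpen_set_pi Set.finite_univ fun _ _ =>
    IsUltrametricDist.isOpen_closedBall _ one_ne_zero

variable (p) in
/-- Haar measure on `ℚ_p`, normalized so that `ℤ_p` has measure `1`. -/
def haarOne : Measure ℚ_[p] :=
  Measure.addHaarMeasure ⟨⟨Metric.closedBall 0 1, isCompact_closedBall _ _⟩, by
    rw [(IsUltrametricDist.isOpen_closedBall _ one_ne_zero).interior_eq]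
    exact ⟨0, by simp⟩⟩

instance : (haarOne p).IsAddHaarMeasure := by unfold haarOne; infer_instance

lemma haarOne_closedBall_one : haarOne p (Metric.closedBall 0 1) = 1 :=
  Measure.addHaarMeasure_self

/-- A translation invariant measure giving `ℤ_p^n` mass `1` is the product Haar measure. -/
lemma eq_pi_haarOne {n : ℕ} (μ : Measure (Fin n → ℚ_[p])) [μ.IsAddLeftInvariant]
    (hμ : μ (stdLat p n) = 1) : μ = Measure.pi fun _ => haarOne p := by
  have : IsFiniteMeasureOnCompacts μ := ⟨fun K hK =>
    measure_lt_top_of_isCompact_of_isAddLeftInvariant _ (isOpen_stdLat n) ⟨0, zero_mem _⟩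
      (by simp [hμ]) hK⟩
  have h := Measure.isAddLeftInvariant_eq_smul μ (Measure.pi fun _ : Fin n => haarOne p)
  have h1 := congrArg (fun ν : Measure (Fin n → ℚ_[p]) => ν (stdLat p n)) h
  simp only [hμ, Measure.smul_apply] at h1
  rw [coe_stdLat, Measure.pi_pi] at h1
  simp only [haarOne_closedBall_one, Finset.prod_const_one] at h1
  rw [h]
  have h2 : (Measure.addHaarScalarFactor μ (Measure.pi fun _ : Fin n => haarOne p)) = 1 := by
    rw [← ENNReal.coe_inj, ENNReal.coe_one, h1, ENNReal.smul_def, smul_eq_mul, mul_one]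
  rw [h2, one_smul]

variable (p) in
/-- The prime `p` as a unit of `ℚ_p`. -/
def pUnit : ℚ_[p]ˣ := Units.mk0 (p : ℚ_[p]) (by exact_mod_cast (Fact.out : p.Prime).ne_zero)

lemma pUnit_smul_closedBall :
    pUnit p • Metric.closedBall (0 : ℚ_[p]) 1 = Metric.closedBall 0 ((p : ℝ)⁻¹) := by
  have hp : (0 : ℝ) < p := by exact_mod_cast (Fact.out : p.Prime).pos
  ext x
  rw [Set.mem_smul_set_iff_inv_smul_mem]
  simp only [pUnit, Units.smul_def, Units.val_inv_eq_inv_val, Units.val_mk0, smul_eq_mul,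
    mem_closedBall_zero_iff, norm_mul, norm_inv, Padic.norm_p, inv_inv]
  rw [← le_inv_mul_iff₀ hp, mul_one]

/-- `ℤ_p` is the disjoint union of the `p` translates `i + p ℤ_p`, `0 ≤ i < p`. -/
lemma haarOne_pUnit_smul :
    p * haarOne p (pUnit p • Metric.closedBall (0 : ℚ_[p]) 1) = 1 := by
  rw [pUnit_smul_closedBall]
  have hp1 : (1 : ℝ) < p := by exact_mod_cast (Fact.out : p.Prime).one_lt
  have hr : (0 : ℝ) < (p : ℝ)⁻¹ := by positivity
  have hiff : ∀ x : ℤ_[p], x ∈ IsLocalRing.maximalIdeal ℤ_[p] ↔ ‖x‖ ≤ (p : ℝ)⁻¹ := by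
    intro x
    rw [IsLocalRing.mem_maximalIdeal, PadicInt.mem_nonunits,
      show (p : ℝ)⁻¹ = (p : ℝ) ^ (-1 : ℤ) by simp, PadicInt.norm_le_pow_iff_norm_lt_pow_add_one]
    simp
  have hU : Metric.closedBall (0 : ℚ_[p]) 1 =
      ⋃ i ∈ Finset.range p, Metric.closedBall (i : ℚ_[p]) ((p : ℝ)⁻¹) := by
    ext x
    simp only [Set.mem_iUnion, Finset.mem_range, exists_prop, mem_closedBall_iff_norm, sub_zero]
    constructor
    · intro hx
      refine ⟨PadicInt.zmodRepr ⟨x, hx⟩, PadicInt.zmodRepr_lt_p _, ?_⟩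
      exact (hiff _).1 (PadicInt.sub_zmodRepr_mem ⟨x, hx⟩)
    · rintro ⟨i, -, hi⟩
      rw [← sub_add_cancel x (i : ℚ_[p])]
      refine (Padic.nonarchimedean _ _).trans (max_le (hi.trans ?_) ?_)
      · exact inv_le_one_of_one_le₀ hp1.le
      · exact Padic.norm_int_le_one (i : ℤ)
  have hd : Set.PairwiseDisjoint (Finset.range p : Set ℕ)
      fun i : ℕ => Metric.closedBall (i : ℚ_[p]) ((p : ℝ)⁻¹) := by
    intro i hi j hj hij
    rw [Function.onFun, Set.disjoint_left]
    intro x hxi hxj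
    apply hij
    simp only [mem_closedBall_iff_norm] at hxi hxj
    simp only [Finset.coe_range, Set.mem_Iio] at hi hj
    have hx : ‖x‖ ≤ 1 := by
      have : x ∈ Metric.closedBall (0 : ℚ_[p]) 1 := by
        rw [hU]
        simp only [Set.mem_iUnion, Finset.mem_range, exists_prop, mem_closedBall_iff_norm]
        exact ⟨i, hi, hxi⟩
      simpa using this
    rw [← PadicInt.zmodRepr_unique ⟨x, hx⟩ i hi ((hiff _).2 hxi),
      ← PadicInt.zmodRepr_unique ⟨x, hx⟩ j hj ((hiff _).2 hxj)]
  have hball : ∀ i : ℚ_[p], haarOne p (Metric.closedBall i ((p : ℝ)⁻¹)) =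
      haarOne p (Metric.closedBall 0 ((p : ℝ)⁻¹)) := by
    intro i
    rw [← measure_preimage_add (haarOne p) i (Metric.closedBall i ((p : ℝ)⁻¹))]
    congr 1
    ext x
    simp
  rw [← haarOne_closedBall_one (p := p), hU,
    measure_biUnion_finset hd fun _ _ => Metric.isClosed_closedBall.measurableSet]
  simp [hball]

lemma prime_pos : (0 : ℝ) < p := by exact_mod_cast (Fact.out : p.Prime).pos

lemma haarOne_pUnit_smul' :
    haarOne p (pUnit p • Metric.closedBall (0 : ℚ_[p]) 1) = (p : ℝ≥0∞)⁻¹ :=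
  ENNReal.eq_inv_of_mul_eq_one_left (by rw [mul_comm]; exact haarOne_pUnit_smul)

/-- Multiplication by `p` on `ℚ_p^n` scales volumes by `p^{-n}`. -/
lemma distribHaarChar_pUnit (n : ℕ) :
    distribHaarChar (Fin n → ℚ_[p]) (pUnit p) = ((p : NNReal) ^ n)⁻¹ := by
  have h1 : (Measure.pi fun _ : Fin n => haarOne p) (stdLat p n) = 1 := by
    rw [coe_stdLat, Measure.pi_pi]; simp [haarOne_closedBall_one]
  have hp : (p : NNReal) ≠ 0 := by exact_mod_cast (Fact.out : p.Prime).ne_zero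
  apply distribHaarChar_eq_of_measure_smul_eq_mul
    (μ := Measure.pi fun _ : Fin n => haarOne p) (s := stdLat p n)
  · rw [h1]; simp
  · rw [h1]; simp
  · have h2 : (pUnit p • (stdLat p n : Set (Fin n → ℚ_[p]))) =
        Set.univ.pi fun _ => pUnit p • Metric.closedBall (0 : ℚ_[p]) 1 := by
      rw [coe_stdLat]
      ext x
      simp only [Set.mem_smul_set_iff_inv_smul_mem, Set.mem_univ_pi, Pi.smul_apply]
    rw [h1, h2, Measure.pi_pi]
    simp only [haarOne_pUnit_smul', Finset.prod_const, Finset.card_univ, Fintype.card_fin]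
    rw [mul_one, ENNReal.coe_inv (by positivity), ENNReal.coe_pow, ENNReal.inv_pow]
    simp

/-- `vol(p^k S) = p^{-kn} vol(S)` in `ℚ_p^n`. -/
lemma measure_zpow_smul {n : ℕ} (μ : Measure (Fin n → ℚ_[p])) [μ.IsAddLeftInvariant]
    (hμ : μ (stdLat p n) = 1) (k : ℤ) (S : Set (Fin n → ℚ_[p])) :
    rvol μ (pUnit p ^ k • S) = ((p : ℝ) ^ n) ^ (-k) * rvol μ S := by
  obtain rfl := eq_pi_haarOne μ hμ
  rw [rvol, ← distribHaarChar_mul, map_zpow, distribHaarChar_pUnit, ENNReal.toReal_mul]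
  simp [rvol]

lemma haarOne_closedBall (k : ℤ) :
    haarOne p {x | ‖x‖ ≤ (p : ℝ) ^ (-k)} = ENNReal.ofReal ((p : ℝ) ^ (-k)) := by
  have hp := prime_pos (p := p)
  have hc : distribHaarChar ℚ_[p] (pUnit p) = (p : NNReal)⁻¹ := by
    have hp : (p : NNReal) ≠ 0 := by exact_mod_cast (Fact.out : p.Prime).ne_zero
    apply distribHaarChar_eq_of_measure_smul_eq_mul
      (μ := haarOne p) (s := Metric.closedBall (0 : ℚ_[p]) 1)
    · rw [haarOne_closedBall_one]; simp
    · rw [haarOne_closedBall_one]; simp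
    · rw [haarOne_pUnit_smul', haarOne_closedBall_one, ENNReal.coe_inv hp]; simp
  have hs : {x : ℚ_[p] | ‖x‖ ≤ (p : ℝ) ^ (-k)} =
      pUnit p ^ k • Metric.closedBall (0 : ℚ_[p]) 1 := by
    ext x
    rw [Set.mem_smul_set_iff_inv_smul_mem]
    simp only [pUnit, Units.smul_def, Units.val_zpow_eq_zpow_val,
      Units.val_mk0, smul_eq_mul, mem_closedBall_zero_iff, norm_mul, norm_zpow,
      Padic.norm_p, Set.mem_ofPred_eq, inv_zpow', neg_neg, ← zpow_neg]
    rw [← le_inv_mul_iff₀ (by positivity), mul_one, zpow_neg]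
  rw [hs, ← distribHaarChar_mul, haarOne_closedBall_one, map_zpow, hc, mul_one,
    ← ENNReal.ofReal_coe_nnreal]
  simp

/-! ### Cosets, Fubini and volumes of lattices -/

section Quotient

variable {n : ℕ} {A : Submodule ℤ_[p] (Fin n → ℚ_[p])}

lemma isOpen_mkQ_preimage (hA : IsOpen (A : Set (Fin n → ℚ_[p])))
    (q : (Fin n → ℚ_[p]) ⧸ A) : IsOpen (A.mkQ ⁻¹' {q}) := by
  obtain ⟨v, rfl⟩ := A.mkQ_surjective q
  have : A.mkQ ⁻¹' {A.mkQ v} = (fun x => x - v) ⁻¹' (A : Set (Fin n → ℚ_[p])) := by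
    ext x
    simp [Submodule.Quotient.eq]
  rw [this]
  exact hA.preimage (by fun_prop)

lemma finite_mkQ_image (hA : IsOpen (A : Set (Fin n → ℚ_[p]))) {B : Set (Fin n → ℚ_[p])}
    (hB : IsCompact B) : (A.mkQ '' B).Finite := by
  obtain ⟨t, ht⟩ := hB.elim_finite_subcover (fun q => A.mkQ ⁻¹' {q}) (isOpen_mkQ_preimage hA)
    (fun x _ => by simp)
  refine t.finite_toSet.subset ?_
  rintro _ ⟨x, hx, rfl⟩
  have := ht hx
  simp only [Set.mem_iUnion] at this
  obtain ⟨i, hi, h⟩ := this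
  simp only [Set.mem_preimage, Set.mem_singleton_iff] at h
  rw [h]
  exact hi

/-- A union of `N` cosets of `A` has volume `N · vol(A)`. -/
lemma rvol_mkQ_preimage (μ : Measure (Fin n → ℚ_[p])) [μ.IsAddLeftInvariant]
    (hA : IsOpen (A : Set (Fin n → ℚ_[p]))) {T : Set ((Fin n → ℚ_[p]) ⧸ A)} (hT : T.Finite) :
    rvol μ (A.mkQ ⁻¹' T) = T.ncard * rvol μ A := by
  lift T to Finset ((Fin n → ℚ_[p]) ⧸ A) using hT
  have h1 : A.mkQ ⁻¹' (T : Set ((Fin n → ℚ_[p]) ⧸ A)) = ⋃ q ∈ T, A.mkQ ⁻¹' {q} := by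
    ext x; simp
  have h2 : ∀ q, μ (A.mkQ ⁻¹' {q}) = μ A := by
    intro q
    obtain ⟨v, rfl⟩ := A.mkQ_surjective q
    rw [← measure_preimage_add μ v]
    congr 1
    ext x
    simp [Submodule.Quotient.mk_eq_zero]
  rw [rvol, h1, measure_biUnion_finset]
  · simp [h2, rvol]
  · intro i _ j _ hij
    rw [Function.onFun, Set.disjoint_left]
    intro x hx hx'
    exact hij (hx.symm.trans hx')
  · exact fun q _ => (isOpen_mkQ_preimage hA q).measurableSet

end Quotient

lemma rvol_pos {n : ℕ} (μ : Measure (Fin n → ℚ_[p])) [μ.IsAddLeftInvariant]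
    (hμ : μ (stdLat p n) = 1) {S : Set (Fin n → ℚ_[p])} (hS : IsOpen S) (hne : S.Nonempty)
    (hK : IsCompact S) : 0 < rvol μ S := by
  obtain rfl := eq_pi_haarOne μ hμ
  exact ENNReal.toReal_pos (hS.measure_pos _ hne).ne' hK.measure_lt_top.ne

variable (p) in
/-- The inclusion of `K^m` into `K^{m+1}` as the hyperplane of vectors with last coordinate `0`. -/
def incl (m : ℕ) : (Fin m → ℚ_[p]) →ₗ[ℤ_[p]] (Fin (m + 1) → ℚ_[p]) where
  toFun y := fun i => if h : (i : ℕ) < m then y ⟨i, h⟩ else 0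
  map_add' x y := by ext i; by_cases h : (i : ℕ) < m <;> simp [h]
  map_smul' a y := by ext i; by_cases h : (i : ℕ) < m <;> simp [h]

lemma restrictSet_coe {m : ℕ} (R : Submodule ℤ_[p] (Fin (m + 1) → ℚ_[p])) :
    restrictSet p m (R : Set (Fin (m + 1) → ℚ_[p])) = R.comap (incl p m) := rfl

@[simp] lemma incl_last {m : ℕ} (y : Fin m → ℚ_[p]) : incl p m y (Fin.last m) = 0 := by
  simp [incl]

@[simp] lemma incl_castSucc {m : ℕ} (y : Fin m → ℚ_[p]) (i : Fin m) :
    incl p m y i.castSucc = y i := by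
  simp [incl]

lemma continuous_incl {m : ℕ} : Continuous (incl p m) := by
  refine continuous_pi fun i => ?_
  refine Fin.lastCases ?_ (fun i => ?_) i
  · simpa using continuous_const
  · simpa using continuous_apply i

lemma mem_Kpred {m : ℕ} {x : Fin (m + 1) → ℚ_[p]} : x ∈ Kpred p m ↔ x (Fin.last m) = 0 := by
  simp [Kpred]

lemma comap_inf_Kpred {m : ℕ} (R : Submodule ℤ_[p] (Fin (m + 1) → ℚ_[p])) :
    (R ⊓ Kpred p m).comap (incl p m) = R.comap (incl p m) := by
  ext y
  simp [mem_Kpred]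

lemma padicInt_smul_eq (a : ℤ_[p]) (x : ℚ_[p]) : a • x = (a : ℚ_[p]) * x := rfl

/-- If `t` lies in `p^k ℤ_p`, then `t` is an integral multiple of `p^k`. -/
lemma exists_eq_mul_zpow {k : ℤ} {t : ℚ_[p]} (ht : ‖t‖ ≤ (p : ℝ) ^ (-k)) :
    ∃ a : ℤ_[p], t = a * (p : ℚ_[p]) ^ k := by
  have hp := prime_pos (p := p)
  have hp' : (p : ℚ_[p]) ≠ 0 := by exact_mod_cast (Fact.out : p.Prime).ne_zero
  refine ⟨⟨t * (p : ℚ_[p]) ^ (-k), ?_⟩, ?_⟩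
  · rw [norm_mul, Padic.norm_p_zpow, neg_neg]
    calc _ ≤ (p : ℝ) ^ (-k) * (p : ℝ) ^ k := by gcongr
      _ = 1 := by rw [← zpow_add₀ hp.ne']; simp
  · rw [mul_assoc, ← zpow_add₀ hp']; simp

lemma norm_coe_mul_zpow_le (a : ℤ_[p]) (k : ℤ) :
    ‖(a : ℚ_[p]) * (p : ℚ_[p]) ^ k‖ ≤ (p : ℝ) ^ (-k) := by
  rw [norm_mul, Padic.norm_p_zpow]
  exact mul_le_of_le_one_left (by have := prime_pos (p := p); positivity) a.2

/-- Fubini for lattices: if the last coordinates of elements of `R` form `p^k ℤ_p`, then the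
fibres of `R` over `p^k ℤ_p` are translates of `R ∩ K^m`. -/
lemma rvol_eq {m : ℕ} (μ : Measure (Fin (m + 1) → ℚ_[p])) [μ.IsAddLeftInvariant]
    (μ' : Measure (Fin m → ℚ_[p])) [μ'.IsAddLeftInvariant]
    (hμ : μ ↑(stdLat p (m + 1)) = 1) (hμ' : μ' ↑(stdLat p m) = 1)
    (R : Submodule ℤ_[p] (Fin (m + 1) → ℚ_[p])) (hR : IsOpen (R : Set (Fin (m + 1) → ℚ_[p])))
    (k : ℤ) (hk : ∀ x ∈ R, ‖x (Fin.last m)‖ ≤ (p : ℝ) ^ (-k))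
    (x₀ : Fin (m + 1) → ℚ_[p]) (hx₀ : x₀ ∈ R) (hx₀k : x₀ (Fin.last m) = (p : ℚ_[p]) ^ k) :
    rvol μ R = (p : ℝ) ^ (-k) * rvol μ' (R.comap (incl p m)) := by
  have hp := prime_pos (p := p)
  obtain rfl := eq_pi_haarOne μ hμ
  obtain rfl := eq_pi_haarOne μ' hμ'
  have e := (measurePreserving_piFinSuccAbove (fun _ : Fin (m + 1) => haarOne p)
    (Fin.last m)).symm
  have hm := hR.measurableSet
  rw [rvol, ← e.measure_preimage hm.nullMeasurableSet,
    Measure.prod_apply (e.measurable hm)]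
  have hfib : ∀ t : ℚ_[p], (Measure.pi fun _ : Fin m => haarOne p)
      (Prod.mk t ⁻¹' ((MeasurableEquiv.piFinSuccAbove (fun _ : Fin (m + 1) => ℚ_[p])
        (Fin.last m)).symm ⁻¹' (R : Set (Fin (m + 1) → ℚ_[p])))) =
      Set.indicator {x : ℚ_[p] | ‖x‖ ≤ (p : ℝ) ^ (-k)} (fun _ =>
        (Measure.pi fun _ : Fin m => haarOne p) (R.comap (incl p m))) t := by
    intro t
    by_cases ht : ‖t‖ ≤ (p : ℝ) ^ (-k)
    · rw [Set.indicator_of_mem (by exact ht)]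
      obtain ⟨a, rfl⟩ := exists_eq_mul_zpow ht
      rw [← measure_preimage_add _ (fun i : Fin m => (a : ℚ_[p]) * x₀ i.castSucc)]
      congr 1
      ext y
      simp only [Set.mem_preimage, SetLike.mem_coe, Submodule.mem_comap,
        MeasurableEquiv.piFinSuccAbove_symm_apply]
      rw [← Submodule.add_mem_iff_right R (R.smul_mem a hx₀) (y := incl p m y)]
      convert Iff.rfl using 2
      ext i
      refine Fin.lastCases ?_ (fun i => ?_) i
      · simp [padicInt_smul_eq, hx₀k]
      · simp [padicInt_smul_eq]
    · rw [Set.indicator_of_notMem (by exact ht)]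
      convert measure_empty (μ := Measure.pi fun _ : Fin m => haarOne p)
      ext y
      simp only [Set.mem_preimage, SetLike.mem_coe, Set.mem_empty_iff_false, iff_false,
        MeasurableEquiv.piFinSuccAbove_symm_apply]
      intro h
      apply ht
      simpa using hk _ h
  simp_rw [hfib]
  have hms : MeasurableSet {x : ℚ_[p] | ‖x‖ ≤ (p : ℝ) ^ (-k)} :=
    measurableSet_le measurable_norm measurable_const
  rw [lintegral_indicator_const hms, haarOne_closedBall, ENNReal.toReal_mul,
    ENNReal.toReal_ofReal (by positivity), mul_comm]
  rfl

/-! ### Lattices with a given intersection with `K^m` -/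

section Lattices

variable {m : ℕ} (R₀ : Submodule ℤ_[p] (Fin m → ℚ_[p]))

/-- The lattice `R₀ + ℤ_p (p^k e_{m+1} + v)` in `K^{m+1}`, where `q = v mod R₀`. -/
def latOf (k : ℤ) (q : (Fin m → ℚ_[p]) ⧸ R₀) : Submodule ℤ_[p] (Fin (m + 1) → ℚ_[p]) where
  carrier := {x | ∃ a : ℤ_[p], x (Fin.last m) = a * (p : ℚ_[p]) ^ k ∧
    R₀.mkQ (Fin.init x) = a • q}
  zero_mem' := ⟨0, by simp, by rw [zero_smul]; exact map_zero _⟩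
  add_mem' := by
    rintro x y ⟨a, ha, ha'⟩ ⟨b, hb, hb'⟩
    refine ⟨a + b, by simp [ha, hb, add_mul], ?_⟩
    rw [add_smul, ← ha', ← hb', ← map_add]
    rfl
  smul_mem' := by
    rintro c x ⟨a, ha, ha'⟩
    refine ⟨c * a, by simp [ha, padicInt_smul_eq, mul_assoc], ?_⟩
    rw [mul_smul, ← ha', ← map_smul]
    rfl

variable {R₀}

lemma mem_latOf {k : ℤ} {q : (Fin m → ℚ_[p]) ⧸ R₀} {x : Fin (m + 1) → ℚ_[p]} :
    x ∈ latOf R₀ k q ↔ ∃ a : ℤ_[p], x (Fin.last m) = a * (p : ℚ_[p]) ^ k ∧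
      R₀.mkQ (Fin.init x) = a • q := Iff.rfl

lemma prime_zpow_ne_zero (k : ℤ) : (p : ℚ_[p]) ^ k ≠ 0 :=
  zpow_ne_zero _ (by exact_mod_cast (Fact.out : p.Prime).ne_zero)

lemma init_incl (y : Fin m → ℚ_[p]) : (Fin.init (incl p m y) : Fin m → ℚ_[p]) = y := by
  ext i
  simp [Fin.init]

lemma comap_latOf (k : ℤ) (q : (Fin m → ℚ_[p]) ⧸ R₀) :
    (latOf R₀ k q).comap (incl p m) = R₀ := by
  ext y
  rw [Submodule.mem_comap, mem_latOf, incl_last, init_incl]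
  constructor
  · rintro ⟨a, ha, ha'⟩
    have : a = 0 := by simpa [prime_zpow_ne_zero, PadicInt.coe_eq_zero] using ha.symm
    rw [this, zero_smul] at ha'
    simpa [Submodule.Quotient.mk_eq_zero] using ha'
  · intro h
    exact ⟨0, by simp, by simpa [Submodule.Quotient.mk_eq_zero] using h⟩

lemma norm_last_le_of_mem_latOf {k : ℤ} {q : (Fin m → ℚ_[p]) ⧸ R₀}
    {x : Fin (m + 1) → ℚ_[p]} (hx : x ∈ latOf R₀ k q) : ‖x (Fin.last m)‖ ≤ (p : ℝ) ^ (-k) := by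
  obtain ⟨a, ha, -⟩ := hx
  rw [ha]
  exact norm_coe_mul_zpow_le a k

lemma snoc_mem_latOf {k : ℤ} (v : Fin m → ℚ_[p]) :
    (Fin.snoc v ((p : ℚ_[p]) ^ k) : Fin (m + 1) → ℚ_[p]) ∈ latOf R₀ k (R₀.mkQ v) :=
  ⟨1, by simp, by rw [Fin.init_snoc (α := fun _ => ℚ_[p]), one_smul]⟩

lemma zpow_le_zpow_iff_padic {j k : ℤ} : (p : ℝ) ^ (-j) ≤ (p : ℝ) ^ (-k) ↔ k ≤ j := by
  rw [zpow_le_zpow_iff_right₀ (by exact_mod_cast (Fact.out : p.Prime).one_lt), neg_le_neg_iff]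

lemma latOf_injective :
    Function.Injective fun x : ℤ × ((Fin m → ℚ_[p]) ⧸ R₀) => latOf R₀ x.1 x.2 := by
  have key : ∀ (k k' : ℤ) (q q' : (Fin m → ℚ_[p]) ⧸ R₀), latOf R₀ k q = latOf R₀ k' q' →
      k' ≤ k := by
    intro k k' q q' h
    obtain ⟨v, rfl⟩ := R₀.mkQ_surjective q
    have h1 := snoc_mem_latOf (R₀ := R₀) (k := k) v
    rw [h] at h1
    have h2 := norm_last_le_of_mem_latOf h1
    rwa [Fin.snoc_last, Padic.norm_p_zpow, zpow_le_zpow_iff_padic] at h2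
  rintro ⟨k, q⟩ ⟨k', q'⟩ h
  simp only at h
  obtain rfl : k = k' := le_antisymm (key _ _ _ _ h.symm) (key _ _ _ _ h)
  obtain ⟨v, rfl⟩ := R₀.mkQ_surjective q
  have h1 := snoc_mem_latOf (R₀ := R₀) (k := k) v
  rw [h] at h1
  obtain ⟨a, ha, ha'⟩ := h1
  rw [Fin.snoc_last] at ha
  have ha1 : a = 1 := by
    have : (a : ℚ_[p]) = 1 := by
      have h3 := prime_zpow_ne_zero (p := p) k
      field_simp at ha
      exact ha.symm
    exact Subtype.ext this
  rw [Fin.init_snoc (α := fun _ => ℚ_[p]), ha1, one_smul] at ha'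
  rw [ha']

lemma isLattice_latOf (hO : IsOpen (R₀ : Set (Fin m → ℚ_[p])))
    (hC : IsCompact (R₀ : Set (Fin m → ℚ_[p]))) (k : ℤ) (q : (Fin m → ℚ_[p]) ⧸ R₀) :
    IsLattice (latOf R₀ k q) := by
  obtain ⟨v, rfl⟩ := R₀.mkQ_surjective q
  constructor
  · -- the lattice is the image of `R₀ × ℤ_p` under `(r, a) ↦ (r + a v, a p^k)`
    have h : (latOf R₀ k (R₀.mkQ v) : Set (Fin (m + 1) → ℚ_[p])) =
        (fun x : (Fin m → ℚ_[p]) × ℤ_[p] => (Fin.snoc (fun i => x.1 i + (x.2 : ℚ_[p]) * v i)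
          ((x.2 : ℚ_[p]) * (p : ℚ_[p]) ^ k) : Fin (m + 1) → ℚ_[p])) ''
          ((R₀ : Set (Fin m → ℚ_[p])) ×ˢ Set.univ) := by
      ext x
      simp only [SetLike.mem_coe, mem_latOf, Set.mem_image, Set.mem_prod, Set.mem_univ, and_true,
        Prod.exists, ← map_smul]
      constructor
      · rintro ⟨a, ha, ha'⟩
        simp only [Submodule.mkQ_apply, Submodule.Quotient.eq] at ha'
        refine ⟨_, a, ha', ?_⟩
        ext i
        refine Fin.lastCases ?_ (fun i => ?_) i
        · simp [ha]
        · simp [Fin.init, padicInt_smul_eq]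
      · rintro ⟨r, a, hr, rfl⟩
        refine ⟨a, by simp, ?_⟩
        simp only [Submodule.mkQ_apply, Submodule.Quotient.eq]
        convert hr using 1
        ext i
        simp [padicInt_smul_eq]
    rw [h]
    refine (hC.prod isCompact_univ).image ?_
    refine continuous_pi fun i => ?_
    refine Fin.lastCases ?_ (fun i => ?_) i
    · simp only [Fin.snoc_last]
      fun_prop
    · simp only [Fin.snoc_castSucc]
      fun_prop
  · -- a neighbourhood of `0`: the last coordinate is so small that its multiple of `v` is in `R₀`
    have h0 : IsOpen {x : Fin (m + 1) → ℚ_[p] | (Fin.init x : Fin m → ℚ_[p]) ∈ R₀ ∧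
        (fun i => x (Fin.last m) * (p : ℚ_[p]) ^ (-k) * v i) ∈ R₀ ∧
        x (Fin.last m) ∈ Metric.ball (0 : ℚ_[p]) ((p : ℝ) ^ (-k))} := by
      refine (hO.preimage ?_).inter ((hO.preimage ?_).inter (Metric.isOpen_ball.preimage ?_))
      · exact continuous_pi fun i => continuous_apply _
      · exact continuous_pi fun i => by fun_prop
      · fun_prop
    have hp := prime_pos (p := p)
    refine AddSubgroup.isOpen_mono (H₁ := AddSubgroup.closure _)
      (H₂ := (latOf R₀ k (R₀.mkQ v)).toAddSubgroup)
      ((AddSubgroup.closure_le _).2 ?_)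
      (AddSubgroup.isOpen_of_mem_nhds _ (g := 0)
        (Filter.mem_of_superset (h0.mem_nhds ?_) AddSubgroup.subset_closure))
    · rintro x ⟨hx1, hx2, hx3⟩
      rw [mem_ball_zero_iff] at hx3
      obtain ⟨a, ha⟩ := exists_eq_mul_zpow hx3.le
      refine ⟨a, ha, ?_⟩
      have : (fun i => x (Fin.last m) * (p : ℚ_[p]) ^ (-k) * v i) = a • v := by
        ext i
        rw [ha, mul_assoc (a : ℚ_[p]), zpow_neg, mul_inv_cancel₀ (prime_zpow_ne_zero k)]
        simp [padicInt_smul_eq]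
      rw [this] at hx2
      rw [← map_smul, Submodule.mkQ_apply, Submodule.mkQ_apply,
        (Submodule.Quotient.mk_eq_zero _).2 hx1, (Submodule.Quotient.mk_eq_zero _).2 hx2]
    · refine ⟨R₀.zero_mem, ?_, ?_⟩
      · convert R₀.zero_mem using 1
        ext i; simp
      · simpa using by positivity

/-- Every lattice meeting `K^m` in `R₀` is one of the `latOf R₀ k q`. -/
lemma exists_latOf_eq {R : Submodule ℤ_[p] (Fin (m + 1) → ℚ_[p])} (hR : IsLattice R)
    (h : R.comap (incl p m) = R₀) : ∃ k q, latOf R₀ k q = R := by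
  -- an element whose last coordinate has maximal norm
  obtain ⟨x₀, hx₀, hmax⟩ := hR.1.exists_isMaxOn (f := fun x => ‖x (Fin.last m)‖)
    ⟨0, R.zero_mem⟩ (by fun_prop)
  have hne : x₀ (Fin.last m) ≠ 0 := by
    intro h0
    have hlast : ∀ x ∈ R, x (Fin.last m) = 0 := by
      intro x hx
      have := hmax hx
      simpa [h0] using this
    have hopen : IsOpen ((fun t : ℚ_[p] => (Pi.single (Fin.last m) t : Fin (m + 1) → ℚ_[p])) ⁻¹'
        (R : Set (Fin (m + 1) → ℚ_[p]))) :=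
      hR.2.preimage (continuous_single _)
    have : ((fun t : ℚ_[p] => (Pi.single (Fin.last m) t : Fin (m + 1) → ℚ_[p])) ⁻¹'
        (R : Set (Fin (m + 1) → ℚ_[p]))) = {0} := by
      ext t
      constructor
      · intro ht
        simpa using hlast _ ht
      · rintro rfl
        simp
    rw [this] at hopen
    exact not_isOpen_singleton _ hopen
  set k := (x₀ (Fin.last m)).valuation with hk
  have hnorm : ‖x₀ (Fin.last m)‖ = (p : ℝ) ^ (-k) := Padic.norm_eq_zpow_neg_valuation hne
  have hp' := prime_zpow_ne_zero (p := p) k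
  -- rescale by a unit so that the last coordinate is `p^k`
  obtain ⟨x₁, hx₁, hx₁k⟩ : ∃ x ∈ R, x (Fin.last m) = (p : ℚ_[p]) ^ k := by
    have hu : ‖(p : ℚ_[p]) ^ k / x₀ (Fin.last m)‖ ≤ 1 := by
      rw [norm_div, hnorm, Padic.norm_p_zpow, div_self]
      have := prime_pos (p := p); positivity
    obtain ⟨u, hu'⟩ : ∃ u : ℤ_[p], (u : ℚ_[p]) = (p : ℚ_[p]) ^ k / x₀ (Fin.last m) :=
      ⟨⟨_, hu⟩, rfl⟩
    refine ⟨u • x₀, R.smul_mem _ hx₀, ?_⟩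
    simp [padicInt_smul_eq, hu', div_mul_cancel₀ _ hne]
  refine ⟨k, R₀.mkQ (Fin.init x₁), ?_⟩
  have hdiff : ∀ (y : Fin (m + 1) → ℚ_[p]) (a : ℤ_[p]), y (Fin.last m) = a * (p : ℚ_[p]) ^ k →
      y - a • x₁ = incl p m (Fin.init y - a • Fin.init x₁) := by
    intro y a ha
    ext i
    refine Fin.lastCases ?_ (fun i => ?_) i
    · simp [padicInt_smul_eq, ha, hx₁k]
    · simp [padicInt_smul_eq, Fin.init]
  have hiff : ∀ (y : Fin (m + 1) → ℚ_[p]) (a : ℤ_[p]), y (Fin.last m) = a * (p : ℚ_[p]) ^ k →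
      (R₀.mkQ (Fin.init y) = a • R₀.mkQ (Fin.init x₁) ↔ y ∈ R) := by
    intro y a ha
    rw [← map_smul, Submodule.mkQ_apply, Submodule.mkQ_apply, Submodule.Quotient.eq, ← h,
      Submodule.mem_comap, ← hdiff y a ha]
    exact Submodule.sub_mem_iff_left R (R.smul_mem a hx₁)
  ext y
  rw [mem_latOf]
  constructor
  · rintro ⟨a, ha, ha'⟩
    exact (hiff y a ha).1 ha'
  · intro hy
    have hle : ‖y (Fin.last m)‖ ≤ (p : ℝ) ^ (-k) := by
      rw [← hnorm]; exact hmax hy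
    obtain ⟨a, ha⟩ := exists_eq_mul_zpow hle
    exact ⟨a, ha, (hiff y a ha).2 hy⟩

end Lattices

/-! ### The invariant `ν` and its distribution -/

section Denominator

variable {m : ℕ} (R₀ : Submodule ℤ_[p] (Fin m → ℚ_[p]))

/-- The image of `ℤ_p^m` in `K^m / R₀`. -/
def intPart : Submodule ℤ_[p] ((Fin m → ℚ_[p]) ⧸ R₀) := (stdLat p m).map R₀.mkQ

/-- The least `k ≥ 0` such that `p^k q` is represented by an integral vector. -/
def nu (q : (Fin m → ℚ_[p]) ⧸ R₀) : ℕ := sInf {k : ℕ | (p : ℤ_[p]) ^ k • q ∈ intPart R₀}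

variable {R₀}

lemma exists_pow_smul_mem (v : Fin m → ℚ_[p]) : ∃ k : ℕ, (p : ℤ_[p]) ^ k • v ∈ stdLat p m := by
  have hc : Filter.Tendsto (fun k : ℕ => (p : ℤ_[p]) ^ k • v) Filter.atTop (nhds 0) := by
    refine tendsto_pi_nhds.2 fun i => ?_
    have h1 : Filter.Tendsto (fun k : ℕ => (p : ℚ_[p]) ^ k * v i) Filter.atTop
        (nhds (0 * v i)) :=
      (tendsto_pow_atTop_nhds_zero_of_norm_lt_one Padic.norm_p_lt_one).mul_const _
    simpa [padicInt_smul_eq] using h1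
  exact (hc.eventually ((isOpen_stdLat m).mem_nhds (zero_mem _))).exists

lemma pow_smul_mem_iff (q : (Fin m → ℚ_[p]) ⧸ R₀) (k : ℕ) :
    (p : ℤ_[p]) ^ k • q ∈ intPart R₀ ↔ nu R₀ q ≤ k := by
  refine ⟨fun h => Nat.sInf_le h, fun h => ?_⟩
  have hne : {k : ℕ | (p : ℤ_[p]) ^ k • q ∈ intPart R₀}.Nonempty := by
    obtain ⟨v, rfl⟩ := R₀.mkQ_surjective q
    obtain ⟨k, hk⟩ := exists_pow_smul_mem v
    exact ⟨k, by rw [Set.mem_ofPred_eq, ← map_smul]; exact Submodule.mem_map_of_mem hk⟩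
  have h1 : (p : ℤ_[p]) ^ nu R₀ q • q ∈ intPart R₀ := Nat.sInf_mem hne
  rw [← Nat.sub_add_cancel h, pow_add, mul_smul]
  exact Submodule.smul_mem _ _ h1

lemma norm_le_of_smul_mem {q : (Fin m → ℚ_[p]) ⧸ R₀} {a : ℤ_[p]} (h : a • q ∈ intPart R₀) :
    ‖a‖ ≤ (p : ℝ) ^ (-(nu R₀ q : ℤ)) := by
  have hp := prime_pos (p := p)
  rcases eq_or_ne a 0 with rfl | ha
  · simp
  rw [PadicInt.norm_eq_zpow_neg_valuation ha, zpow_le_zpow_iff_padic, Nat.cast_le,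
    ← pow_smul_mem_iff]
  have h1 := Submodule.smul_mem (intPart R₀) (↑(PadicInt.unitCoeff ha)⁻¹ : ℤ_[p]) h
  have h2 : (↑(PadicInt.unitCoeff ha)⁻¹ : ℤ_[p]) * a = (p : ℤ_[p]) ^ a.valuation := by
    rw [Units.inv_mul_eq_iff_eq_mul]
    exact PadicInt.unitCoeff_spec ha
  rwa [← mul_smul, h2] at h1

/-- The last coordinates of the integral vectors of `latOf R₀ k q` lie in
`p^{max(0, k + ν(q))} ℤ_p`. -/
lemma norm_last_le_of_mem_inf {k : ℤ} {q : (Fin m → ℚ_[p]) ⧸ R₀} {x : Fin (m + 1) → ℚ_[p]}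
    (hx : x ∈ latOf R₀ k q ⊓ stdLat p (m + 1)) :
    ‖x (Fin.last m)‖ ≤ (p : ℝ) ^ (-(max 0 (k + nu R₀ q))) := by
  obtain ⟨⟨a, ha, ha'⟩, hx⟩ := hx
  have hx := mem_stdLat.1 hx
  have hp := prime_pos (p := p)
  rcases max_cases 0 (k + (nu R₀ q : ℤ)) with ⟨h, -⟩ | ⟨h, -⟩
  · rw [h]; simpa using hx (Fin.last m)
  · rw [h, ha, norm_mul, Padic.norm_p_zpow, neg_add_rev, zpow_add₀ hp.ne']
    gcongr
    apply norm_le_of_smul_mem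
    rw [← ha']
    exact Submodule.mem_map_of_mem (mem_stdLat.2 fun i => hx i.castSucc)

/-- The bound of `norm_last_le_of_mem_inf` is attained. -/
lemma exists_mem_inf (k : ℤ) (q : (Fin m → ℚ_[p]) ⧸ R₀) :
    ∃ x ∈ latOf R₀ k q ⊓ stdLat p (m + 1),
      x (Fin.last m) = (p : ℚ_[p]) ^ (max 0 (k + nu R₀ q)) := by
  obtain ⟨j, hj⟩ : ∃ j : ℕ, (j : ℤ) + k = max 0 (k + nu R₀ q) :=
    ⟨(max (nu R₀ q : ℤ) (-k)).toNat, by omega⟩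
  have hj1 : nu R₀ q ≤ j := by omega
  obtain ⟨y, hy, hyq⟩ := (pow_smul_mem_iff q j).2 hj1
  have hp : (p : ℚ_[p]) ≠ 0 := by exact_mod_cast (Fact.out : p.Prime).ne_zero
  refine ⟨Fin.snoc y ((p : ℚ_[p]) ^ (max 0 (k + nu R₀ q))), ⟨⟨(p : ℤ_[p]) ^ j, ?_, ?_⟩, ?_⟩, ?_⟩
  · rw [Fin.snoc_last, ← hj, zpow_add₀ hp]; simp
  · rw [Fin.init_snoc (α := fun _ => ℚ_[p]), hyq]
  · refine mem_stdLat.2 fun i => ?_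
    refine Fin.lastCases ?_ (fun i => ?_) i
    · rw [Fin.snoc_last, Padic.norm_p_zpow]
      exact zpow_le_one_of_nonpos₀ (by exact_mod_cast (Fact.out : p.Prime).one_le) (by omega)
    · rw [Fin.snoc_castSucc]
      exact mem_stdLat.1 hy i
  · rw [Fin.snoc_last]

/-- `[ℤ_p^m : R₀ ∩ ℤ_p^m] = 1 / vol(R₀ ∩ ℤ_p^m)`, where the index is computed in `K^m / R₀`. -/
lemma ncard_intPart (μ : Measure (Fin m → ℚ_[p])) [μ.IsAddLeftInvariant]
    (hμ : μ (stdLat p m) = 1) (hO : IsOpen (R₀ : Set (Fin m → ℚ_[p]))) :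
    ((intPart R₀ : Set ((Fin m → ℚ_[p]) ⧸ R₀)).ncard : ℝ) *
      rvol μ (R₀ ⊓ stdLat p m : Submodule ℤ_[p] (Fin m → ℚ_[p])) = 1 := by
  set C : Submodule ℤ_[p] (Fin m → ℚ_[p]) := R₀ ⊓ stdLat p m with hCdef
  have hCO : IsOpen (C : Set (Fin m → ℚ_[p])) := hO.inter (isOpen_stdLat m)
  have h1 := rvol_mkQ_preimage μ hCO (finite_mkQ_image hCO (isCompact_stdLat m))
  have h2 : C.mkQ ⁻¹' (C.mkQ '' (stdLat p m : Set (Fin m → ℚ_[p]))) = stdLat p m := by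
    refine Set.Subset.antisymm ?_ (Set.subset_preimage_image _ _)
    rintro x ⟨y, hy, hxy⟩
    rw [Submodule.mkQ_apply, Submodule.mkQ_apply, Submodule.Quotient.eq] at hxy
    simpa using (stdLat p m).sub_mem hy hxy.2
  have h3 : (intPart R₀ : Set ((Fin m → ℚ_[p]) ⧸ R₀)).ncard =
      (C.mkQ '' (stdLat p m : Set (Fin m → ℚ_[p]))).ncard := by
    have h4 : (intPart R₀ : Set ((Fin m → ℚ_[p]) ⧸ R₀)) = Submodule.factor inf_le_left ''
        (C.mkQ '' (stdLat p m : Set (Fin m → ℚ_[p]))) := by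
      rw [Set.image_image]; rfl
    rw [h4]
    apply Set.InjOn.ncard_image
    rintro _ ⟨x, hx, rfl⟩ _ ⟨y, hy, rfl⟩ hxy
    have hxy' : R₀.mkQ x = R₀.mkQ y := hxy
    rw [Submodule.mkQ_apply, Submodule.mkQ_apply, Submodule.Quotient.eq] at hxy' ⊢
    exact ⟨hxy', (stdLat p m).sub_mem hx hy⟩
  rw [h3, ← h1, h2, rvol, hμ, ENNReal.toReal_one]

lemma coe_pUnit_zpow_smul (k : ℕ) (S : Set (Fin m → ℚ_[p])) :
    pUnit p ^ (-(k : ℤ)) • S = {v | (p : ℤ_[p]) ^ k • v ∈ S} := by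
  ext v
  rw [Set.mem_smul_set_iff_inv_smul_mem, Set.mem_ofPred_eq, zpow_neg, inv_inv, zpow_natCast]
  convert Iff.rfl using 2
  ext i
  simp [padicInt_smul_eq, pUnit, Units.smul_def]

lemma finite_nu_le (hO : IsOpen (R₀ : Set (Fin m → ℚ_[p])))
    (hC : IsCompact (R₀ : Set (Fin m → ℚ_[p]))) (k : ℕ) : {q : (Fin m → ℚ_[p]) ⧸ R₀ | nu R₀ q ≤ k}.Finite := by
  have hK : IsCompact (pUnit p ^ (-(k : ℤ)) •
      ((R₀ : Set (Fin m → ℚ_[p])) + (stdLat p m : Set (Fin m → ℚ_[p])))) :=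
    (hC.add (isCompact_stdLat m)).smul _
  refine (finite_mkQ_image hO hK).subset ?_
  intro q hq
  obtain ⟨v, rfl⟩ := R₀.mkQ_surjective q
  refine ⟨v, ?_, rfl⟩
  rw [coe_pUnit_zpow_smul]
  rw [Set.mem_ofPred_eq, ← pow_smul_mem_iff, ← map_smul] at hq
  obtain ⟨y, hy, hyq⟩ := hq
  rw [Submodule.mkQ_apply, Submodule.mkQ_apply, eq_comm, Submodule.Quotient.eq] at hyq
  exact ⟨_, hyq, y, hy, by simp⟩

/-- The number of `q` with `ν(q) ≤ k` is `p^{km} / vol(R₀ ∩ ℤ_p^m)`. -/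
lemma ncard_nu_le (μ : Measure (Fin m → ℚ_[p])) [μ.IsAddLeftInvariant]
    (hμ : μ (stdLat p m) = 1) (hO : IsOpen (R₀ : Set (Fin m → ℚ_[p])))
    (hC : IsCompact (R₀ : Set (Fin m → ℚ_[p]))) (k : ℕ) :
    ({q : (Fin m → ℚ_[p]) ⧸ R₀ | nu R₀ q ≤ k}.ncard : ℝ) = ((p : ℝ) ^ m) ^ k *
      (rvol μ (R₀ ⊓ stdLat p m : Submodule ℤ_[p] (Fin m → ℚ_[p])))⁻¹ := by
  have hpos := rvol_pos μ hμ hO ⟨0, R₀.zero_mem⟩ hC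
  have h0 := rvol_mkQ_preimage μ hO
    (T := (intPart R₀ : Set ((Fin m → ℚ_[p]) ⧸ R₀))) (finite_mkQ_image hO (isCompact_stdLat m))
  have h1 := rvol_mkQ_preimage μ hO (finite_nu_le hO hC k)
  have h2 : R₀.mkQ ⁻¹' {q : (Fin m → ℚ_[p]) ⧸ R₀ | nu R₀ q ≤ k} = pUnit p ^ (-(k : ℤ)) •
      (R₀.mkQ ⁻¹' (intPart R₀ : Set ((Fin m → ℚ_[p]) ⧸ R₀))) := by
    ext v
    rw [coe_pUnit_zpow_smul]
    simp only [Set.mem_preimage, Set.mem_ofPred_eq, ← pow_smul_mem_iff, SetLike.mem_coe, map_smul]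
  rw [h2, measure_zpow_smul μ hμ, h0, neg_neg, zpow_natCast, ← mul_assoc] at h1
  rw [← mul_right_cancel₀ hpos.ne' h1, eq_inv_of_mul_eq_one_left (ncard_intPart μ hμ hO)]

end Denominator

/-! ### Geometric series -/

section Series

lemma hasSum_of_eq {ι E : Type*} [AddCommMonoid E] [TopologicalSpace E] {f g : ι → E} {a : E}
    (h : ∀ i, f i = g i) (hg : HasSum g a) : HasSum f a := by
  rwa [funext h]

/-- The geometric series in `j = k + ν(q)`, split into `j ≥ 0` (ratio `(xy)⁻¹`) and `j < 0`
(ratio `x`). -/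
lemma hasSum_int {x y : ℂ} (hx : ‖x‖ < 1) (hxy : 1 < ‖x * y‖) :
    HasSum (fun j : ℤ => x ^ (-j) * y ^ (-max 0 j))
      ((1 - (x * y)⁻¹)⁻¹ + x * (1 - x)⁻¹) := by
  refine HasSum.of_nat_of_neg_add_one ?_ ?_
  · have h : ‖(x * y)⁻¹‖ < 1 := by
      rw [norm_inv]; exact inv_lt_one_of_one_lt₀ hxy
    refine hasSum_of_eq (fun n => ?_) (hasSum_geometric_of_norm_lt_one h)
    rw [max_eq_right (by positivity), ← mul_zpow, zpow_neg, zpow_natCast, inv_pow]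
  · refine hasSum_of_eq (fun n => ?_) ((hasSum_geometric_of_norm_lt_one hx).mul_left x)
    rw [max_eq_left (by omega), neg_neg, neg_zero, zpow_zero, mul_one, ← pow_succ']
    exact_mod_cast rfl

variable {Q : Type*} {ν : Q → ℕ} {P c : ℝ}

/-- The cardinality of a fibre of `ν`, as a difference of two consecutive sublevel counts; at
`k = 0` nothing is subtracted. -/
lemma ncard_fiber (hfin : ∀ k, {q | ν q ≤ k}.Finite) (hP : P ≠ 0)
    (hcard : ∀ k, ({q | ν q ≤ k}.ncard : ℝ) = P ^ k * c) (k : ℕ) :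
    (Nat.card {q // ν q = k} : ℝ) = c * ((1 - P⁻¹) * P ^ k + if k = 0 then P⁻¹ else 0) := by
  change ({q | ν q = k}.ncard : ℝ) = _
  rcases k with _ | k
  · have := hcard 0
    simp only [Nat.le_zero] at this
    rw [this]
    simp
  · have hd : {q | ν q ≤ k + 1} = {q | ν q ≤ k} ∪ {q | ν q = k + 1} := by
      ext q; simp only [Set.mem_union, Set.mem_ofPred_eq]; omega
    have h := hcard (k + 1)
    have hfin' : {q | ν q = k + 1}.Finite :=
      (hfin (k + 1)).subset fun q (hq : ν q = k + 1) => le_of_eq hq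
    rw [hd, Set.ncard_union_eq _ (hfin k) hfin', Nat.cast_add, hcard k] at h
    · rw [eq_sub_of_add_eq' h]
      simp only [Nat.succ_ne_zero, if_false, pow_succ]
      field_simp
      ring
    · rw [Set.disjoint_left]
      intro q h1 h2
      simp only [Set.mem_ofPred_eq] at h1 h2
      omega

/-- The generating function of `ν`: if `#{ν ≤ k} = c P^k`, then `∑ z^ν = c (1 - z)/(1 - P z)`. -/
lemma hasSum_pow_nu (hfin : ∀ k, {q | ν q ≤ k}.Finite) (hP : 0 < P)
    (hcard : ∀ k, ({q | ν q ≤ k}.ncard : ℝ) = P ^ k * c) {z : ℂ} (hz : P * ‖z‖ < 1) :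
    HasSum (fun q => z ^ ν q) (c * ((1 - z) / (1 - P * z))) ∧
      Summable fun q => ‖z ^ ν q‖ := by
  have hft : ∀ k, Finite {q // ν q = k} := fun k =>
    ((hfin k).subset fun q (hq : ν q = k) => le_of_eq hq).to_subtype
  have := fun k => Fintype.ofFinite {q // ν q = k}
  have hfiber : ∀ (𝕜 : Type) [RCLike 𝕜] (w : 𝕜) (k : ℕ),
      HasSum (fun q : {q // ν q = k} => w ^ ν q.1) ((Nat.card {q // ν q = k} : 𝕜) * w ^ k) := by
    intro 𝕜 _ w k
    convert hasSum_fintype (fun q : {q // ν q = k} => w ^ ν q.1) using 1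
    rw [Finset.sum_congr rfl fun q _ => by rw [q.2]]
    simp
  have hseries : ∀ (𝕜 : Type) [RCLike 𝕜] (w : 𝕜), ‖(P : 𝕜) * w‖ < 1 →
      HasSum (fun k => (Nat.card {q // ν q = k} : 𝕜) * w ^ k)
        ((c : 𝕜) * ((1 - (P : 𝕜)⁻¹) * (1 - P * w)⁻¹ + (P : 𝕜)⁻¹)) := by
    intro 𝕜 _ w hw
    have h1 := (hasSum_geometric_of_norm_lt_one hw).mul_left (1 - (P : 𝕜)⁻¹)
    have h2 := hasSum_ite_eq 0 (P : 𝕜)⁻¹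
    refine hasSum_of_eq (fun k => ?_) ((h1.add h2).mul_left (c : 𝕜))
    have h3 := congrArg (RCLike.ofReal : ℝ → 𝕜) (ncard_fiber hfin hP.ne' hcard k)
    rw [RCLike.ofReal_natCast] at h3
    rw [h3]
    rcases eq_or_ne k 0 with rfl | hk
    · simp
    · simp only [hk, if_false, add_zero]
      push_cast
      ring
  have hsum : Summable fun q => ‖z ^ ν q‖ := by
    rw [← (Equiv.sigmaFiberEquiv ν).summable_iff, summable_sigma_of_nonneg fun _ => by simp]
    simp only [Function.comp_apply, Equiv.sigmaFiberEquiv_apply, norm_pow]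
    refine ⟨fun k => (hfiber ℝ ‖z‖ k).summable, ?_⟩
    simp_rw [fun k => (hfiber ℝ ‖z‖ k).tsum_eq]
    refine (hseries ℝ ‖z‖ ?_).summable
    simpa [abs_of_pos hP] using hz
  refine ⟨?_, hsum⟩
  rw [← (Equiv.sigmaFiberEquiv ν).hasSum_iff]
  have hPz : ‖(P : ℂ) * z‖ < 1 := by
    simpa [abs_of_pos hP] using hz
  have hne : (1 - (P : ℂ) * z) ≠ 0 := by
    intro h
    rw [← sub_eq_zero.1 h] at hPz
    simp at hPz
  have hP' : (P : ℂ) ≠ 0 := by exact_mod_cast hP.ne'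
  have hval : (c : ℂ) * ((1 - z) / (1 - P * z)) =
      c * ((1 - (P : ℂ)⁻¹) * (1 - P * z)⁻¹ + (P : ℂ)⁻¹) := by
    rw [div_eq_mul_inv, ← sub_eq_zero]
    have h1 := mul_inv_cancel₀ hne
    have h2 := mul_inv_cancel₀ hP'
    linear_combination (c * (P : ℂ)⁻¹) * h1 + (c * z * (1 - (P : ℂ) * z)⁻¹) * h2
  rw [hval]
  exact HasSum.sigma_of_hasSum (hseries ℂ z hPz) (fun k => hfiber ℂ z k)
    ((Equiv.sigmaFiberEquiv ν).summable_iff.2 hsum.of_norm)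

lemma hasSum_int_mul_pow_nu (hfin : ∀ k, {q | ν q ≤ k}.Finite) (hP : 0 < P)
    (hcard : ∀ k, ({q | ν q ≤ k}.ncard : ℝ) = P ^ k * c) {x y : ℂ} (hx : ‖x‖ < 1)
    (hPx : P * ‖x‖ < 1) (hxy : 1 < ‖x * y‖) :
    HasSum (fun t : ℤ × Q => x ^ (-t.1) * y ^ (-max 0 t.1) * x ^ ν t.2)
      (((1 - (x * y)⁻¹)⁻¹ + x * (1 - x)⁻¹) * (c * ((1 - x) / (1 - P * x)))) := by
  have hA := hasSum_int hx hxy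
  have hB := hasSum_pow_nu hfin hP hcard hPx
  have hn : Summable fun j : ℤ => ‖x ^ (-j) * y ^ (-max 0 j)‖ := hA.summable.norm
  have hS : Summable fun t : ℤ × Q => x ^ (-t.1) * y ^ (-max 0 t.1) * x ^ ν t.2 :=
    summable_mul_of_summable_norm (f := fun j : ℤ => x ^ (-j) * y ^ (-max 0 j))
      (g := fun q => x ^ ν q) hn hB.2
  exact HasSum.mul (f := fun j : ℤ => x ^ (-j) * y ^ (-max 0 j))
      (g := fun q => x ^ ν q) hA hB.1 hS

lemma ofReal_zpow_cpow (k : ℤ) (s : ℂ) :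
    (((p : ℝ) ^ k : ℝ) : ℂ) ^ s = ((p : ℂ) ^ s) ^ k := by
  have hp := prime_pos (p := p)
  have h1 : (((p : ℝ) ^ k : ℝ) : ℂ) ≠ 0 := by exact_mod_cast (zpow_pos hp k).ne'
  have h2 : (p : ℂ) ≠ 0 := by exact_mod_cast hp.ne'
  rw [Complex.cpow_def_of_ne_zero h1, Complex.cpow_def_of_ne_zero h2, ← Complex.ofReal_log
    (by positivity), Real.log_zpow, ← Complex.exp_int_mul, Complex.natCast_log.symm]
  push_cast
  ring_nf

end Series

/-! ### Summation over the parameters -/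

section Assembly

variable {m : ℕ}

lemma comap_stdLat : (stdLat p (m + 1)).comap (incl p m) = stdLat p m := by
  ext y
  simp only [Submodule.mem_comap, mem_stdLat]
  refine ⟨fun h i => by simpa using h i.castSucc, fun h i => ?_⟩
  refine Fin.lastCases ?_ (fun i => ?_) i
  · simp
  · simpa using h i

lemma incl_init {x : Fin (m + 1) → ℚ_[p]} (hx : x (Fin.last m) = 0) :
    incl p m (Fin.init x) = x := by
  ext i
  refine Fin.lastCases ?_ (fun i => ?_) i
  · simp [hx]
  · simp [Fin.init]

lemma inf_Kpred_eq_iff {R R' : Submodule ℤ_[p] (Fin (m + 1) → ℚ_[p])} (hR' : R' ≤ Kpred p m) :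
    R ⊓ Kpred p m = R' ↔ R.comap (incl p m) = R'.comap (incl p m) := by
  constructor
  · rintro rfl
    rw [comap_inf_Kpred]
  · intro h
    ext x
    have hx : ∀ h0 : x (Fin.last m) = 0, x ∈ R ↔ x ∈ R' := by
      intro h0
      rw [← incl_init h0, ← Submodule.mem_comap, h, Submodule.mem_comap]
    rw [Submodule.mem_inf, mem_Kpred]
    exact ⟨fun h1 => (hx h1.2).1 h1.1, fun h1 =>
      ⟨(hx (mem_Kpred.1 (hR' h1))).2 h1, mem_Kpred.1 (hR' h1)⟩⟩

lemma isOpen_comap_incl {R' : Submodule ℤ_[p] (Fin (m + 1) → ℚ_[p])}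
    (hR' : IsLatticeWithin (Kpred p m) R') :
    IsOpen (R'.comap (incl p m) : Set (Fin m → ℚ_[p])) := by
  have h : Continuous fun y : Fin m → ℚ_[p] =>
      (⟨incl p m y, mem_Kpred.2 (incl_last y)⟩ : Kpred p m) :=
    continuous_incl.subtype_mk _
  exact hR'.2.2.preimage h

lemma isCompact_comap_incl {R' : Submodule ℤ_[p] (Fin (m + 1) → ℚ_[p])}
    (hR' : IsLatticeWithin (Kpred p m) R') :
    IsCompact (R'.comap (incl p m) : Set (Fin m → ℚ_[p])) := by
  have h : (R'.comap (incl p m) : Set (Fin m → ℚ_[p])) =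
      (fun x : Fin (m + 1) → ℚ_[p] => (Fin.init x : Fin m → ℚ_[p])) ''
        (R' : Set (Fin (m + 1) → ℚ_[p])) := by
    ext y
    constructor
    · intro hy
      exact ⟨_, hy, init_incl y⟩
    · rintro ⟨x, hx, rfl⟩
      rw [SetLike.mem_coe, Submodule.mem_comap, incl_init (mem_Kpred.1 (hR'.1 hx))]
      exact hx
  rw [h]
  exact hR'.2.1.image (continuous_pi fun i => continuous_apply _)

/-- The summand attached to `(k, q)` is `p^{-kβ} p^{-max(0, k + ν(q)) α}`. -/
lemma summand_latOf (μ : Measure (Fin (m + 1) → ℚ_[p])) [μ.IsAddLeftInvariant]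
    (μ' : Measure (Fin m → ℚ_[p])) [μ'.IsAddLeftInvariant]
    (hμ : μ ↑(stdLat p (m + 1)) = 1) (hμ' : μ' ↑(stdLat p m) = 1)
    {R₀ : Submodule ℤ_[p] (Fin m → ℚ_[p])} (hO : IsOpen (R₀ : Set (Fin m → ℚ_[p])))
    (hC : IsCompact (R₀ : Set (Fin m → ℚ_[p]))) (α β : ℂ) (k : ℤ) (q : (Fin m → ℚ_[p]) ⧸ R₀) :
    ((rvol μ ↑(latOf R₀ k q) / rvol μ' (restrictSet p m
        ((latOf R₀ k q ⊓ Kpred p m : Submodule ℤ_[p] (Fin (m + 1) → ℚ_[p])) :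
          Set (Fin (m + 1) → ℚ_[p]))) : ℝ) : ℂ) ^ β *
      ((rvol μ ↑(latOf R₀ k q ⊓ stdLat p (m + 1)) / rvol μ' (restrictSet p m
        ((latOf R₀ k q ⊓ stdLat p (m + 1) ⊓ Kpred p m :
          Submodule ℤ_[p] (Fin (m + 1) → ℚ_[p])) : Set (Fin (m + 1) → ℚ_[p]))) : ℝ) : ℂ) ^ α =
      ((p : ℂ) ^ β) ^ (-k) * ((p : ℂ) ^ α) ^ (-max 0 (k + nu R₀ q)) := by
  have hL := (isLattice_latOf hO hC k q).2
  obtain ⟨v, hv⟩ := R₀.mkQ_surjective q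
  have hx₀ : (Fin.snoc v ((p : ℚ_[p]) ^ k) : Fin (m + 1) → ℚ_[p]) ∈ latOf R₀ k q :=
    hv ▸ snoc_mem_latOf v
  obtain ⟨x₁, hx₁, hx₁k⟩ := exists_mem_inf k q
  have hinf : (latOf R₀ k q ⊓ stdLat p (m + 1)).comap (incl p m) = R₀ ⊓ stdLat p m := by
    rw [Submodule.comap_inf, comap_latOf, comap_stdLat]
  have h1 := rvol_eq μ μ' hμ hμ' (latOf R₀ k q) hL k (fun x => norm_last_le_of_mem_latOf) _ hx₀
    (by rw [Fin.snoc_last])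
  have h2 := rvol_eq μ μ' hμ hμ' (latOf R₀ k q ⊓ stdLat p (m + 1))
    (hL.inter (isOpen_stdLat (m + 1))) _ (fun x => norm_last_le_of_mem_inf) x₁ hx₁ hx₁k
  have hpos1 := rvol_pos μ' hμ' hO ⟨0, R₀.zero_mem⟩ hC
  have hpos2 : 0 < rvol μ' (R₀ ⊓ stdLat p m : Submodule ℤ_[p] (Fin m → ℚ_[p])) :=
    rvol_pos μ' hμ' (hO.inter (isOpen_stdLat m)) ⟨0, zero_mem (R₀ ⊓ stdLat p m)⟩
      (hC.inter (isCompact_stdLat m))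
  rw [restrictSet_coe, restrictSet_coe, comap_inf_Kpred, comap_inf_Kpred, h1, h2, hinf,
    comap_latOf, mul_div_cancel_right₀ _ hpos1.ne', mul_div_cancel_right₀ _ hpos2.ne',
    ofReal_zpow_cpow, ofReal_zpow_cpow]

/-- The change of variables `(j, q) ↦ (j - ν(q), q)`. -/
def shiftEquiv {Q : Type*} (ν : Q → ℕ) : ℤ × Q ≃ ℤ × Q where
  toFun x := (x.1 - ν x.2, x.2)
  invFun x := (x.1 + ν x.2, x.2)
  left_inv x := by simp
  right_inv x := by simp

/-- The product of the geometric series in `j` and the generating function of `ν`, with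
`x = p^β`, `y = p^α`, `P = p^m`. -/
lemma series_value {x y P V : ℂ} (hx : x ≠ 0) (hy : y ≠ 0) (h1 : 1 - x ≠ 0)
    (h2 : 1 - (x * y)⁻¹ ≠ 0) :
    ((1 - (x * y)⁻¹)⁻¹ + x * (1 - x)⁻¹) * (V⁻¹ * ((1 - x) / (1 - P * x))) =
      (1 - y⁻¹) / ((1 - (x * y)⁻¹) * (1 - P * x)) * V⁻¹ := by
  have key : ((1 - (x * y)⁻¹)⁻¹ + x * (1 - x)⁻¹) * (1 - x) =
      (1 - y⁻¹) * (1 - (x * y)⁻¹)⁻¹ := by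
    have e1 := mul_inv_cancel₀ h1
    have e2 := mul_inv_cancel₀ h2
    have e3 : x * (x * y)⁻¹ = y⁻¹ := by field_simp
    generalize (1 - (x * y)⁻¹)⁻¹ = A at *
    generalize (1 - x)⁻¹ = B at *
    generalize (x * y)⁻¹ = C at *
    linear_combination x * e1 - x * e2 - A * e3
  calc _ = ((1 - (x * y)⁻¹)⁻¹ + x * (1 - x)⁻¹) * (1 - x) * ((1 - P * x)⁻¹ * V⁻¹) := by ring
    _ = _ := by rw [key, div_eq_mul_inv, mul_inv (1 - (x * y)⁻¹)]; ring

/-- The sum over the parameters `(k, q)`. -/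
lemma hasSum_params (μ' : Measure (Fin m → ℚ_[p])) [μ'.IsAddLeftInvariant]
    (hμ' : μ' ↑(stdLat p m) = 1)
    {R₀ : Submodule ℤ_[p] (Fin m → ℚ_[p])} (hO : IsOpen (R₀ : Set (Fin m → ℚ_[p])))
    (hC : IsCompact (R₀ : Set (Fin m → ℚ_[p]))) {α β : ℂ} (hβ : β.re + (m + 1) - 1 < 0)
    (hαβ : 0 < (α + β).re) :
    HasSum (fun t : ℤ × ((Fin m → ℚ_[p]) ⧸ R₀) =>
        ((p : ℂ) ^ β) ^ (-t.1) * ((p : ℂ) ^ α) ^ (-max 0 (t.1 + nu R₀ t.2)))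
      ((1 - (p : ℂ) ^ (-α)) /
        ((1 - (p : ℂ) ^ (-α - β)) * (1 - (p : ℂ) ^ (β + (m + 1 : ℂ) - 1))) *
        ((rvol μ' (R₀ ⊓ stdLat p m : Submodule ℤ_[p] (Fin m → ℚ_[p])) : ℝ) : ℂ)⁻¹) := by
  have hp := prime_pos (p := p)
  have hp1 : (1 : ℝ) < p := by exact_mod_cast (Fact.out : p.Prime).one_lt
  have hpC : (p : ℂ) ≠ 0 := by exact_mod_cast hp.ne'
  have hnorm : ∀ s : ℂ, ‖(p : ℂ) ^ s‖ = (p : ℝ) ^ s.re := fun s =>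
    Complex.norm_natCast_cpow_of_pos (by exact_mod_cast hp) s
  obtain ⟨x, hx⟩ : ∃ x, (p : ℂ) ^ β = x := ⟨_, rfl⟩
  obtain ⟨y, hy⟩ : ∃ y, (p : ℂ) ^ α = y := ⟨_, rfl⟩
  have hPx : (p : ℝ) ^ m * ‖x‖ < 1 := by
    rw [← hx, hnorm, ← Real.rpow_natCast, ← Real.rpow_add hp]
    exact Real.rpow_lt_one_of_one_lt_of_neg hp1 (by linarith)
  have hx1 : ‖x‖ < 1 := by
    rw [← hx, hnorm]
    have : (0 : ℝ) ≤ m := m.cast_nonneg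
    exact Real.rpow_lt_one_of_one_lt_of_neg hp1 (by linarith)
  have hxyeq : (p : ℂ) ^ (α + β) = x * y := by
    rw [← hx, ← hy, ← Complex.cpow_add _ _ hpC, add_comm]
  have hxy : 1 < ‖x * y‖ := by
    rw [← hxyeq, hnorm]
    exact Real.one_lt_rpow hp1 hαβ
  have hx0 : x ≠ 0 := by simp [← hx, Complex.cpow_eq_zero_iff, hpC]
  have hy0 : y ≠ 0 := by simp [← hy, Complex.cpow_eq_zero_iff, hpC]
  have h1 : (p : ℂ) ^ (-α) = y⁻¹ := by rw [Complex.cpow_neg, hy]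
  have h2 : (p : ℂ) ^ (-α - β) = (x * y)⁻¹ := by
    rw [← hxyeq, ← Complex.cpow_neg]; ring_nf
  have h3 : (p : ℂ) ^ (β + (m + 1 : ℂ) - 1) = (((p : ℝ) ^ m : ℝ) : ℂ) * x := by
    rw [show β + (m + 1 : ℂ) - 1 = m + β by ring, Complex.cpow_add _ _ hpC,
      Complex.cpow_natCast, hx]
    push_cast
    rfl
  have n1 : (1 - x) ≠ 0 := by
    intro h
    rw [← sub_eq_zero.1 h] at hx1
    simp at hx1
  have n2 : 1 - (x * y)⁻¹ ≠ 0 := by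
    intro h
    rw [inv_eq_one.1 (sub_eq_zero.1 h).symm] at hxy
    simp at hxy
  have hAB := hasSum_int_mul_pow_nu (finite_nu_le hO hC) (P := (p : ℝ) ^ m) (by positivity)
    (ncard_nu_le μ' hμ' hO hC) hx1 hPx hxy
  rw [h1, h2, h3, hx, hy, ← series_value hx0 hy0 n1 n2, ← Complex.ofReal_inv,
    ← (shiftEquiv (nu R₀)).hasSum_iff]
  refine hasSum_of_eq ?_ hAB
  rintro ⟨j, q⟩
  change x ^ (-(j - (nu R₀ q : ℤ))) * y ^ (-max 0 (j - (nu R₀ q : ℤ) + nu R₀ q)) = _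
  rw [sub_add_cancel, neg_sub, sub_eq_add_neg, zpow_add₀ hx0, zpow_natCast]
  ring

end Assembly

end Prelim

/-- Summation over all lattices `R` in `ℚ_p^{m+1}` with `R ∩ K^m = R'` of
`(vol R/vol(R∩K^m))^β (vol(R∩O^{m+1})/vol(R∩O^m))^α` gives the local beta-factor
`(1-p^{-α}) / ((1-p^{-α-β})(1-p^{β+(m+1)-1})) · 1/vol(O^m ∩ R')`. -/
theorem beta_sum_step (p m : ℕ) [Fact p.Prime]
    (μ : Measure (Fin (m + 1) → ℚ_[p])) [μ.IsAddLeftInvariant]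
    (μ' : Measure (Fin m → ℚ_[p])) [μ'.IsAddLeftInvariant]
    (hμ : μ ↑(stdLat p (m + 1)) = 1) (hμ' : μ' ↑(stdLat p m) = 1)
    (R' : Submodule ℤ_[p] (Fin (m + 1) → ℚ_[p])) (hR' : IsLatticeWithin (Kpred p m) R')
    (α β : ℂ) (hβ : β.re + (m + 1) - 1 < 0) (hαβ : 0 < (α + β).re) :
    HasSum
      (fun R : {R : Submodule ℤ_[p] (Fin (m + 1) → ℚ_[p]) //
          IsLattice R ∧ R ⊓ Kpred p m = R'} =>
        ((rvol μ ↑R.1 / rvol μ' (restrictSet p m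
            ((R.1 ⊓ Kpred p m : Submodule ℤ_[p] (Fin (m + 1) → ℚ_[p])) :
              Set (Fin (m + 1) → ℚ_[p]))) : ℝ) : ℂ) ^ β *
        ((rvol μ ↑(R.1 ⊓ stdLat p (m + 1)) / rvol μ' (restrictSet p m
            ((R.1 ⊓ stdLat p (m + 1) ⊓ Kpred p m : Submodule ℤ_[p] (Fin (m + 1) → ℚ_[p])) :
              Set (Fin (m + 1) → ℚ_[p]))) : ℝ) : ℂ) ^ α)
      ((1 - (p : ℂ) ^ (-α)) /
        ((1 - (p : ℂ) ^ (-α - β)) * (1 - (p : ℂ) ^ (β + (m + 1 : ℂ) - 1))) *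
        ((rvol μ' (restrictSet p m
            ((R' ⊓ stdLat p (m + 1) : Submodule ℤ_[p] (Fin (m + 1) → ℚ_[p])) :
              Set (Fin (m + 1) → ℚ_[p]))) : ℝ) : ℂ)⁻¹) := by
  obtain ⟨R₀, hR₀⟩ : ∃ R₀, R'.comap (incl p m) = R₀ := ⟨_, rfl⟩
  have hO : IsOpen (R₀ : Set (Fin m → ℚ_[p])) := hR₀ ▸ isOpen_comap_incl hR'
  have hC : IsCompact (R₀ : Set (Fin m → ℚ_[p])) := hR₀ ▸ isCompact_comap_incl hR'
  have hle : R' ≤ Kpred p m := hR'.1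
  rw [restrictSet_coe (R' ⊓ stdLat p (m + 1)), Submodule.comap_inf, comap_stdLat, hR₀]
  have e : Function.Bijective (fun x : ℤ × ((Fin m → ℚ_[p]) ⧸ R₀) =>
      (⟨latOf R₀ x.1 x.2, isLattice_latOf hO hC _ _,
        (inf_Kpred_eq_iff hle).2 ((comap_latOf _ _).trans hR₀.symm)⟩ :
        {R : Submodule ℤ_[p] (Fin (m + 1) → ℚ_[p]) // IsLattice R ∧ R ⊓ Kpred p m = R'})) := by
    refine ⟨fun x y h => latOf_injective (congrArg Subtype.val h), ?_⟩
    rintro ⟨R, hR, hRR'⟩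
    obtain ⟨k, q, h⟩ := exists_latOf_eq hR (((inf_Kpred_eq_iff hle).1 hRR').trans hR₀)
    exact ⟨(k, q), Subtype.ext h⟩
  rw [← (Equiv.ofBijective _ e).hasSum_iff]
  exact hasSum_of_eq (fun t => summand_latOf μ μ' hμ hμ' hO hC α β t.1 t.2)
    (hasSum_params μ' hμ' hO hC hβ hαβ)
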